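/- arXiv:1902.03102 — 3 statements merged into one kernel-verified Lean document; each statement's English description precedes it below -/
import Mathlib

section
/- Let Ω = {0,1}^N, S : Ω → {1,...,K} a statistic, m_i, n_k ∈ [0,1], and let C be the nonempty set of distributions p on Ω with p(t_i = 1) = m_i for all i and p(S = k) = n_k for all k. Let Z = {t ∈ Ω : p(t) = 0 for every p ∈ C}. Then the entropy-maximizing distribution p* over C has the form: there exist positive reals u_0, u_1, ..., u_N and v_1, ..., v_K such that p*(t) = u_0 · ∏_{i=1}^N u_i^{t_i} · ∏_{k=1}^K v_k^{[S(t)=k]} for every t ∉ Z, and p*(t) = 0 for every t ∈ Z. Moreover, a transaction t belongs to Z if and only if p(t) = 0 for all p ∈ C. -/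
/-!
The argument is the Lagrange multiplier computation for entropy, carried out on the support of the
maximizer `p*`.

*Support.* If some `p ∈ C` has `p t₀ > 0` while `p* t₀ = 0`, then moving from `p*` towards `p` by a
weight `s` changes the entropy by at least `s (H p - H p*) - p t₀ · s log s`, because `-x log x` is
concave and has infinite slope at `0`. This is positive for small `s`, contradicting maximality
(`pos_of_isMax`). Hence `Z` is exactly the zero set of `p*`.

*Stationarity.* If a direction `d` vanishes on `Z` and preserves all constraints, then
`p* + s d ∈ C` for all small `s` of either sign, so the derivative of the entropy at `s = 0`
vanishes, which says `∑ d t log p* t = 0` (`sum_mul_log_eq_zero`).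

*Duality.* So the linear form `d ↦ ∑ d t log p* t` vanishes on the common kernel of the margin
forms, the statistic forms and the coordinate forms on `Z`, hence is a linear combination of them.
Evaluating at the indicator of `t ∉ Z` writes `log p* t` as a sum of multipliers, and exponentiating
gives the product form. The normalization form is the sum of the statistic forms, so `u₀ = 1` works.
-/

/-- Shannon entropy of a distribution on `{0,1}^N`, with the convention `0 log 0 = 0`. -/
noncomputable def shannonEntropy (N : ℕ) (p : (Fin N → Bool) → ℝ) : ℝ :=
  -∑ t : Fin N → Bool, p t * Real.log (p t)

open Real in
/-- If `q` maximizes entropy along the segment from `q` to `p`, then `q` is positive wherever `p`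
is: the slope of `-x log x` is infinite at `0`. -/
lemma pos_of_isMax {T : Type*} [Fintype T] (p q : T → ℝ)
    (hp : ∀ t, 0 ≤ p t) (hq : ∀ t, 0 ≤ q t)
    (hmax : ∀ s : ℝ, 0 ≤ s → s ≤ 1 →
      ∑ t, negMulLog ((1 - s) * q t + s * p t) ≤ ∑ t, negMulLog (q t))
    (t₀ : T) (h0 : 0 < p t₀) : 0 < q t₀ := by
  classical
  by_contra hneg
  have hq0 : q t₀ = 0 := le_antisymm (not_lt.mp hneg) (hq t₀)
  set D : ℝ := ∑ t, negMulLog (q t) - ∑ t, negMulLog (p t) with hD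
  have hD0 : 0 ≤ D := by
    have := hmax 1 zero_le_one le_rfl
    simp at this
    linarith
  -- chosen so that `-p t₀ * log s = D + 1` exceeds the largest possible entropy loss per unit `s`
  set s : ℝ := exp (-((D + 1) / p t₀)) with hs
  have hs0 : 0 < s := exp_pos _
  have hs1 : s ≤ 1 := exp_le_one_iff.mpr (by
    have : 0 ≤ (D + 1) / p t₀ := by positivity
    linarith)
  have key : ∀ t, (1 - s) * negMulLog (q t) + s * negMulLog (p t)
      + (if t = t₀ then p t₀ * negMulLog s else 0)
      ≤ negMulLog ((1 - s) * q t + s * p t) := by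
    intro t
    split_ifs with h
    · subst h
      rw [hq0]
      simp only [mul_zero, zero_add, negMulLog_zero]
      rw [negMulLog_mul]
      linarith
    · have := concaveOn_negMulLog.2 (hq t) (hp t) (sub_nonneg.mpr hs1) hs0.le (by ring)
      simpa using this
  have hsum := (Finset.sum_le_sum fun t (_ : t ∈ Finset.univ) => key t).trans
    (hmax s hs0.le hs1)
  rw [Finset.sum_add_distrib, Finset.sum_add_distrib, ← Finset.mul_sum, ← Finset.mul_sum,
    Finset.sum_ite_eq' Finset.univ t₀] at hsum
  have hlog : p t₀ * negMulLog s = s * (D + 1) := by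
    rw [negMulLog, hs, log_exp]
    field_simp
  simp only [Finset.mem_univ, if_true, hlog] at hsum
  nlinarith

open Real Filter Topology in
/-- First-order condition at an entropy maximizer, along a direction supported on the support of
`q` and of total mass zero. -/
lemma sum_mul_log_eq_zero {T : Type*} [Fintype T] (q d : T → ℝ)
    (hd : ∀ t, q t = 0 → d t = 0) (hd0 : ∑ t, d t = 0)
    (hmax : ∀ᶠ s : ℝ in 𝓝 0, ∑ t, negMulLog (q t + s * d t) ≤ ∑ t, negMulLog (q t)) :
    ∑ t, d t * log (q t) = 0 := by
  have hder : HasDerivAt (fun s : ℝ => ∑ t, negMulLog (q t + s * d t))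
      (∑ t, (-log (q t) - 1) * d t) 0 := by
    refine HasDerivAt.fun_sum fun t _ => ?_
    by_cases h : q t = 0
    · simpa [h, hd t h] using hasDerivAt_const (0 : ℝ) (0 : ℝ)
    · have h1 : HasDerivAt (fun s : ℝ => q t + s * d t) (d t) 0 := by
        simpa using ((hasDerivAt_id (0 : ℝ)).mul_const (d t)).const_add (q t)
      have h2 : HasDerivAt negMulLog (-log (q t) - 1) (q t + 0 * d t) := by
        simpa using hasDerivAt_negMulLog h
      exact h2.comp (0 : ℝ) h1
  have hloc : IsLocalMax (fun s : ℝ => ∑ t, negMulLog (q t + s * d t)) 0 := by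
    filter_upwards [hmax] with s hs
    simpa using hs
  have h := hloc.hasDerivAt_eq_zero hder
  have h' : ∑ t, (-log (q t) - 1) * d t = -(∑ t, d t * log (q t)) - ∑ t, d t := by
    rw [← Finset.sum_neg_distrib, ← Finset.sum_sub_distrib]
    exact Finset.sum_congr rfl fun t _ => by ring
  rw [h', hd0] at h
  linarith

open Filter Topology in
/-- Small perturbations supported on the support of `q` stay nonnegative. -/
lemma eventually_nonneg {T : Type*} [Fintype T] (q d : T → ℝ) (hq : ∀ t, 0 ≤ q t)
    (hd : ∀ t, q t = 0 → d t = 0) : ∀ᶠ s : ℝ in 𝓝 0, ∀ t, 0 ≤ q t + s * d t := by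
  refine eventually_all.mpr fun t => ?_
  rcases (hq t).eq_or_lt with h | h
  · simp [← h, hd t h.symm]
  · have hc : Tendsto (fun s : ℝ => q t + s * d t) (𝓝 0) (𝓝 (q t)) := by
      have : Continuous fun s : ℝ => q t + s * d t := by fun_prop
      simpa using this.tendsto 0
    exact (hc.eventually (lt_mem_nhds h)).mono fun _ hs => hs.le

/-- The linear form `d ↦ ∑ t, w t * d t`. -/
noncomputable def weightForm {T : Type*} [Fintype T] (w : T → ℝ) : (T → ℝ) →ₗ[ℝ] ℝ :=
  ∑ t, w t • LinearMap.proj t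

lemma weightForm_apply {T : Type*} [Fintype T] (w d : T → ℝ) :
    weightForm w d = ∑ t, w t * d t := by
  simp [weightForm]

/-- Finite-dimensional duality: a weight orthogonal to everything orthogonal to the family `a` is
a linear combination of `a`. -/
lemma exists_coeff {T ι : Type*} [Fintype T] [Fintype ι] (a : ι → T → ℝ) (w : T → ℝ)
    (h : ∀ d : T → ℝ, (∀ j, ∑ t, a j t * d t = 0) → ∑ t, w t * d t = 0) :
    ∃ c : ι → ℝ, ∀ t, w t = ∑ j, c j * a j t := by
  classical
  have hker : ⨅ j, (weightForm (a j)).ker ≤ (weightForm w).ker := by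
    intro d hd
    simp only [Submodule.mem_iInf, LinearMap.mem_ker, weightForm_apply] at hd ⊢
    exact h d hd
  have hmem := mem_span_of_iInf_ker_le_ker hker
  obtain ⟨c, hc⟩ := (Submodule.mem_span_range_iff_exists_fun ℝ).mp hmem
  refine ⟨c, fun t => ?_⟩
  have := congrArg (fun L => L (Pi.single t 1)) hc
  simpa [weightForm_apply, Pi.single_apply] using this.symm

/-- the maximum entropy distribution subject to column margins and statistic
probabilities has an exponential (product) form outside the set `Z` of transactions on which
every distribution of `C` vanishes, and vanishes on `Z`. -/
theorem maxent_exponential_form (N K : ℕ) (S : (Fin N → Bool) → Fin K)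
    (m : Fin N → ℝ) (n : Fin K → ℝ)
    (hm : ∀ i, 0 ≤ m i ∧ m i ≤ 1) (hn : ∀ k, 0 ≤ n k ∧ n k ≤ 1)
    (C : Set ((Fin N → Bool) → ℝ))
    (hC : C = {p | (∀ t, 0 ≤ p t) ∧ (∑ t : Fin N → Bool, p t) = 1 ∧
      (∀ i : Fin N, ∑ t ∈ Finset.univ.filter (fun t : Fin N → Bool => t i = true), p t = m i) ∧
      (∀ k : Fin K, ∑ t ∈ Finset.univ.filter (fun t : Fin N → Bool => S t = k), p t = n k)})
    (hne : C.Nonempty)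
    (pstar : (Fin N → Bool) → ℝ) (hpC : pstar ∈ C)
    (hmax : ∀ p ∈ C, shannonEntropy N p ≤ shannonEntropy N pstar) :
    ∃ (Z : Set (Fin N → Bool)) (u0 : ℝ) (u : Fin N → ℝ) (v : Fin K → ℝ),
      0 < u0 ∧ (∀ i, 0 < u i) ∧ (∀ k, 0 < v k) ∧
      (∀ t ∉ Z, pstar t =
        u0 * (∏ i : Fin N, u i ^ (if t i = true then 1 else 0 : ℕ)) *
          (∏ k : Fin K, v k ^ (if S t = k then 1 else 0 : ℕ))) ∧
      (∀ t ∈ Z, pstar t = 0) ∧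
      (∀ t, t ∈ Z ↔ ∀ p ∈ C, p t = 0) := by
  have hent : ∀ p, shannonEntropy N p = ∑ t, Real.negMulLog (p t) := by
    intro p
    simp [shannonEntropy, Real.negMulLog]
  simp only [hent] at hmax
  subst hC
  obtain ⟨hq, hq1, hqm, hqn⟩ := hpC
  have hsupp : ∀ t, (∀ p ∈ {p : (Fin N → Bool) → ℝ |
      (∀ t, 0 ≤ p t) ∧ (∑ t : Fin N → Bool, p t) = 1 ∧
      (∀ i : Fin N, ∑ t ∈ Finset.univ.filter (fun t : Fin N → Bool => t i = true), p t = m i) ∧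
      (∀ k : Fin K, ∑ t ∈ Finset.univ.filter (fun t : Fin N → Bool => S t = k), p t = n k)},
      p t = 0) ↔ pstar t = 0 := by
    refine fun t => ⟨fun h => h pstar ⟨hq, hq1, hqm, hqn⟩, fun h0 p hp => ?_⟩
    obtain ⟨hp, hp1, hpm, hpn⟩ := hp
    by_contra hne0
    refine (pos_of_isMax p pstar hp hq (fun s hs0 hs1 => ?_) t
      (lt_of_le_of_ne (hp t) (Ne.symm hne0))).ne' h0
    refine hmax (fun t => (1 - s) * pstar t + s * p t) ⟨fun t => ?_, ?_, fun i => ?_, fun k => ?_⟩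
    · exact add_nonneg (mul_nonneg (by linarith) (hq t)) (mul_nonneg hs0 (hp t))
    · rw [Finset.sum_add_distrib, ← Finset.mul_sum, ← Finset.mul_sum, hq1, hp1]; ring
    · rw [Finset.sum_add_distrib, ← Finset.mul_sum, ← Finset.mul_sum, hqm, hpm]; ring
    · rw [Finset.sum_add_distrib, ← Finset.mul_sum, ← Finset.mul_sum, hqn, hpn]; ring
  -- the margin forms, the statistic forms, and the coordinate forms on the zero set of `pstar`
  -- (the last family is padded with zero forms at the points where `pstar` is positive)
  let a : Fin N ⊕ Fin K ⊕ (Fin N → Bool) → (Fin N → Bool) → ℝ :=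
    Sum.elim (fun i t => if t i = true then 1 else 0)
      (Sum.elim (fun k t => if S t = k then 1 else 0)
        (fun t' t => if t = t' then (if pstar t' = 0 then 1 else 0) else 0))
  obtain ⟨c, hc⟩ := exists_coeff a (fun t => Real.log (pstar t)) (by
    intro d hd
    have hdm : ∀ i : Fin N,
        ∑ t ∈ Finset.univ.filter (fun t : Fin N → Bool => t i = true), d t = 0 := by
      intro i
      simpa [a, Finset.sum_filter] using hd (Sum.inl i)
    have hdn : ∀ k : Fin K,
        ∑ t ∈ Finset.univ.filter (fun t : Fin N → Bool => S t = k), d t = 0 := by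
      intro k
      simpa [a, Finset.sum_filter] using hd (Sum.inr (Sum.inl k))
    have hdz : ∀ t, pstar t = 0 → d t = 0 := by
      intro t ht
      simpa [a, ht] using hd (Sum.inr (Sum.inr t))
    have hd0 : ∑ t, d t = 0 := by
      rw [← Finset.sum_fiberwise Finset.univ S d]
      exact Finset.sum_eq_zero fun k _ => hdn k
    simp only [mul_comm (Real.log _)]
    refine sum_mul_log_eq_zero pstar d hdz hd0 ?_
    filter_upwards [eventually_nonneg pstar d hq hdz] with s hs
    refine hmax (fun t => pstar t + s * d t) ⟨hs, ?_, fun i => ?_, fun k => ?_⟩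
    · rw [Finset.sum_add_distrib, ← Finset.mul_sum, hq1, hd0]; ring
    · rw [Finset.sum_add_distrib, ← Finset.mul_sum, hqm, hdm]; ring
    · rw [Finset.sum_add_distrib, ← Finset.mul_sum, hqn, hdn]; ring)
  refine ⟨{t | pstar t = 0}, 1, fun i => Real.exp (c (Sum.inl i)),
    fun k => Real.exp (c (Sum.inr (Sum.inl k))), one_pos, fun _ => Real.exp_pos _,
    fun _ => Real.exp_pos _, fun t ht => ?_, fun t ht => ht, fun t => (hsupp t).symm⟩
  have ht0 : pstar t ≠ 0 := ht
  have hlog := hc t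
  simp only [a, Fintype.sum_sum_type, Sum.elim_inl, Sum.elim_inr] at hlog
  have hz : ∑ t', c (Sum.inr (Sum.inr t')) *
      (if t = t' then (if pstar t' = 0 then (1 : ℝ) else 0) else 0) = 0 := by
    simp [ht0]
  rw [hz, add_zero] at hlog
  rw [← Real.exp_log (lt_of_le_of_ne (hq t) ht0.symm), hlog, Real.exp_add, Real.exp_sum,
    Real.exp_sum, one_mul]
  congr 1 <;> refine Finset.prod_congr rfl fun j _ => ?_ <;> split_ifs <;> simp
end

section
/- Let t_1,...,t_N be independent Bernoulli random variables with P(t_l = 1) = p_l ∈ [0,1], and for i ≤ N write P_i(k, j) for the probability that, among the first i coordinates, the lazarus count equals k and the last one-position equals j. Then for 2 ≤ i ≤ N and 1 ≤ k ≤ i - 2: P_i(k, i) = p_i · ∑_{l=0}^{k} P_{i-1}(l, i + l - k - 1). -/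
/-!
Condition on the value of coordinate `i`. The last one-position within `1,...,i` is `i` exactly
when `t_i = 1`. In that case, if the last one-position `j` within `1,...,i-1` is positive, the zeros
in positions `j+1,...,i-1` become lazarus items and no others do, so the lazarus count grows from
`l` to `l + (i-1-j)` (`lazTo_succ`); if `j = 0` the count is `0`. Hence, as `k ≥ 1`, the event on
the left is `t_i = 1` together with the event `IsPred` that `j = i + l - k - 1` for the previous
count `l ≤ k`. The event `IsPred` depends only on the first `i - 1` coordinates, so independence
(`sum_coord_true`) factors out `p_i`, and splitting `IsPred` by the value of `l` gives the sum.
-/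

/-- Probability of the transaction `t` under independent Bernoulli coordinates, where item
`l ∈ {1,...,N}` (coordinate `l-1`) takes value `1` with probability `p l`. -/
noncomputable def bernProb (N : ℕ) (p : ℕ → ℝ) (t : Fin N → Bool) : ℝ :=
  ∏ l : Fin N, if t l = true then p ((l : ℕ) + 1) else 1 - p ((l : ℕ) + 1)

/-- The lazarus count of the restriction of `t` to its first `i` coordinates
(items `1,...,i`): the number of zeros lying strictly between two ones, all within the
first `i` coordinates. -/
def lazTo (N : ℕ) (t : Fin N → Bool) (i : ℕ) : ℕ :=
  (Finset.univ.filter fun l : Fin N =>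
    (l : ℕ) + 1 ≤ i ∧ t l = false ∧
      ∃ a b : Fin N, (b : ℕ) + 1 ≤ i ∧ a < l ∧ l < b ∧ t a = true ∧ t b = true).card

/-- The last one-position (in `{1,...,i}`, or `0` if none) of the restriction of `t` to its
first `i` coordinates. -/
def lastTo (N : ℕ) (t : Fin N → Bool) (i : ℕ) : ℕ :=
  (Finset.univ.filter fun l : Fin N => (l : ℕ) + 1 ≤ i ∧ t l = true).sup fun l => (l : ℕ) + 1

/-- `P_i(k, j)`: the probability that, among the first `i` coordinates, the lazarus count
equals `k` and the last one-position equals `j`. -/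
noncomputable def lazLastProb (N : ℕ) (p : ℕ → ℝ) (i k j : ℕ) : ℝ :=
  ∑ t ∈ Finset.univ.filter
      (fun t : Fin N → Bool => lazTo N t i = k ∧ lastTo N t i = j),
    bernProb N p t

/-- The event that the first `n` coordinates have some lazarus count `l ≤ k` and last one-position
`n + l - k`, written without subtraction. -/
def IsPred (N n k : ℕ) (t : Fin N → Bool) : Prop :=
  lazTo N t n ≤ k ∧ lastTo N t n + k = n + lazTo N t n

lemma lastTo_le (N : ℕ) (t : Fin N → Bool) (n : ℕ) : lastTo N t n ≤ n := by
  unfold lastTo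
  apply Finset.sup_le
  intro l hl
  simp only [Finset.mem_filter] at hl
  exact hl.2.1

lemma le_lastTo {N : ℕ} {t : Fin N → Bool} {n : ℕ} {l : Fin N} (hl : (l : ℕ) + 1 ≤ n)
    (ht : t l = true) : (l : ℕ) + 1 ≤ lastTo N t n := by
  unfold lastTo
  exact Finset.le_sup (f := fun l : Fin N => (l : ℕ) + 1)
    (Finset.mem_filter.2 ⟨Finset.mem_univ l, hl, ht⟩)

lemma exists_of_lastTo_pos {N : ℕ} {t : Fin N → Bool} {n : ℕ} (h : 0 < lastTo N t n) :
    ∃ m : Fin N, (m : ℕ) + 1 = lastTo N t n ∧ t m = true := by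
  unfold lastTo at h ⊢
  obtain ⟨m, hm, _⟩ := (Finset.lt_sup_iff).1 h
  obtain ⟨m, hm, he⟩ := Finset.exists_mem_eq_sup _ ⟨m, hm⟩ (fun l : Fin N => (l : ℕ) + 1)
  exact ⟨m, he.symm, (Finset.mem_filter.1 hm).2.2⟩

lemma lastTo_succ_eq_iff {N n : ℕ} (hn : n < N) (t : Fin N → Bool) :
    lastTo N t (n + 1) = n + 1 ↔ t ⟨n, hn⟩ = true := by
  constructor
  · intro h
    obtain ⟨m, hm, ht⟩ := exists_of_lastTo_pos (t := t) (n := n + 1) (by omega)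
    have : m = ⟨n, hn⟩ := Fin.ext (by simp only; omega)
    rwa [← this]
  · intro h
    exact le_antisymm (lastTo_le _ _ _) (le_lastTo (l := ⟨n, hn⟩) le_rfl h)

/-- Appending a one turns exactly the zeros after the previous last one into lazarus items. -/
lemma lazTo_succ {N n : ℕ} (hn : n < N) (t : Fin N → Bool) (hc : t ⟨n, hn⟩ = true)
    (hpos : 0 < lastTo N t n) :
    lazTo N t (n + 1) = lazTo N t n + (n - lastTo N t n) := by
  obtain ⟨m, hm, htm⟩ := exists_of_lastTo_pos hpos
  have hle := lastTo_le N t n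
  have hcard : (Finset.univ.filter fun l : Fin N => lastTo N t n ≤ (l : ℕ) ∧ (l : ℕ) < n).card
      = n - lastTo N t n := by
    rw [← Nat.card_Ico, ← Finset.card_map Fin.valEmbedding]
    congr 1
    ext x
    simp only [Finset.mem_map, Finset.mem_filter, Finset.mem_univ, true_and, Finset.mem_Ico,
      Fin.valEmbedding_apply]
    exact ⟨by rintro ⟨a, ha, rfl⟩; exact ha, fun hx => ⟨⟨x, by omega⟩, hx, rfl⟩⟩
  rw [← hcard]
  unfold lazTo
  rw [← Finset.card_union_of_disjoint]
  · congr 1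
    ext l
    simp only [Finset.mem_filter, Finset.mem_univ, true_and, Finset.mem_union]
    constructor
    · rintro ⟨h1, h2, a, b, hb, hal, hlb, hta, htb⟩
      have hlb' : (l : ℕ) < b := hlb
      by_cases hl : lastTo N t n ≤ (l : ℕ)
      · exact Or.inr ⟨hl, by omega⟩
      · -- `l` precedes the previous last one `m`, which serves as its right-hand witness.
        refine Or.inl ⟨by omega, h2, a, m, by omega, hal, ?_, hta, htm⟩
        have hne : l ≠ m := by
          rintro rfl
          simp [htm] at h2
        have : (l : ℕ) ≠ m := fun h => hne (Fin.ext h)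
        exact Fin.lt_def.2 (by omega)
    · rintro (⟨h1, h2, a, b, hb, hal, hlb, hta, htb⟩ | ⟨h1, h2⟩)
      · exact ⟨by omega, h2, a, b, by omega, hal, hlb, hta, htb⟩
      · refine ⟨by omega, ?_, m, ⟨n, hn⟩, le_rfl, Fin.lt_def.2 (by omega), Fin.lt_def.2 h2,
          htm, hc⟩
        by_contra hl
        have := le_lastTo (t := t) (n := n) (l := l) (by omega) (by simpa using hl)
        omega
  · rw [Finset.disjoint_left]
    intro l hl hl'
    simp only [Finset.mem_filter, Finset.mem_univ, true_and] at hl hl'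
    obtain ⟨_, _, _, b, hb, _, hlb, _, htb⟩ := hl
    have := le_lastTo hb htb
    have hlb' : (l : ℕ) < b := hlb
    omega

lemma lazTo_succ_of_lastTo_eq_zero {N n : ℕ} (t : Fin N → Bool) (h0 : lastTo N t n = 0) :
    lazTo N t (n + 1) = 0 := by
  unfold lazTo
  rw [Finset.card_eq_zero, Finset.filter_eq_empty_iff]
  rintro l - ⟨h1, _, a, b, hb, hal, hlb, hta, _⟩
  have hal' : (a : ℕ) < l := hal
  have := le_lastTo (t := t) (n := n) (l := a) (by omega) hta
  omega

lemma event_iff {N n k : ℕ} (hn : n < N) (hk1 : 1 ≤ k) (hk2 : k < n) (t : Fin N → Bool) :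
    (lazTo N t (n + 1) = k ∧ lastTo N t (n + 1) = n + 1) ↔
      (t ⟨n, hn⟩ = true ∧ IsPred N n k t) := by
  rw [lastTo_succ_eq_iff hn, and_comm]
  refine and_congr_right fun hc => ?_
  have hle := lastTo_le N t n
  unfold IsPred
  rcases Nat.eq_zero_or_pos (lastTo N t n) with h0 | hpos
  · rw [lazTo_succ_of_lastTo_eq_zero t h0]
    omega
  · rw [lazTo_succ hn t hc hpos]
    omega

lemma lastTo_congr {N n : ℕ} {s t : Fin N → Bool} (h : ∀ l : Fin N, (l : ℕ) < n → s l = t l) :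
    lastTo N s n = lastTo N t n := by
  unfold lastTo
  congr 1
  refine Finset.filter_congr fun l _ => and_congr_right fun hl => ?_
  rw [h l hl]

lemma lazTo_congr {N n : ℕ} {s t : Fin N → Bool} (h : ∀ l : Fin N, (l : ℕ) < n → s l = t l) :
    lazTo N s n = lazTo N t n := by
  unfold lazTo
  congr 1
  refine Finset.filter_congr fun l _ => and_congr_right fun hl => ?_
  rw [h l hl]
  refine and_congr_right fun _ => exists_congr fun a => exists_congr fun b =>
    and_congr_right fun hb => and_congr_right fun hal => and_congr_right fun hlb => ?_
  have hal' : (a : ℕ) < l := hal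
  rw [h a (by omega), h b hb]

lemma isPred_update {N n k : ℕ} (hn : n < N) (t : Fin N → Bool) (b : Bool) :
    IsPred N n k (Function.update t ⟨n, hn⟩ b) ↔ IsPred N n k t := by
  have h : ∀ l : Fin N, (l : ℕ) < n → Function.update t ⟨n, hn⟩ b l = t l := by
    intro l hl
    apply Function.update_of_ne
    rintro rfl
    simp at hl
  unfold IsPred
  rw [lazTo_congr h, lastTo_congr h]

/-- Independence of coordinate `c` from an event `E` determined by the other coordinates. -/
lemma sum_coord_true {N : ℕ} (p : ℕ → ℝ) (c : Fin N) (E : (Fin N → Bool) → Prop)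
    [DecidablePred E] (hE : ∀ t b, E (Function.update t c b) ↔ E t) :
    ∑ t ∈ Finset.univ.filter (fun t : Fin N → Bool => t c = true ∧ E t), bernProb N p t
      = p ((c : ℕ) + 1) * ∑ t ∈ Finset.univ.filter E, bernProb N p t := by
  -- `W t` is the weight of the coordinates of `t` other than `c`.
  set W : (Fin N → Bool) → ℝ := fun t =>
    ∏ l ∈ Finset.univ.erase c, if t l = true then p ((l : ℕ) + 1) else 1 - p ((l : ℕ) + 1) with hW
  have hbern : ∀ t, bernProb N p t
      = (if t c = true then p ((c : ℕ) + 1) else 1 - p ((c : ℕ) + 1)) * W t := fun t =>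
    (Finset.mul_prod_erase Finset.univ
      (fun l : Fin N => if t l = true then p ((l : ℕ) + 1) else 1 - p ((l : ℕ) + 1))
      (Finset.mem_univ c)).symm
  have hWu : ∀ t b, W (Function.update t c b) = W t := by
    intro t b
    refine Finset.prod_congr rfl fun l hl => ?_
    rw [Function.update_of_ne (Finset.ne_of_mem_erase hl)]
  have htrue : ∑ t ∈ Finset.univ.filter (fun t : Fin N → Bool => t c = true ∧ E t), bernProb N p t
      = p ((c : ℕ) + 1) *
        ∑ t ∈ Finset.univ.filter (fun t : Fin N → Bool => t c = true ∧ E t), W t := by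
    rw [Finset.mul_sum]
    refine Finset.sum_congr rfl fun t ht => ?_
    rw [hbern, if_pos (Finset.mem_filter.1 ht).2.1]
  have hfalse : ∑ t ∈ Finset.univ.filter (fun t : Fin N → Bool => ¬ t c = true ∧ E t),
        bernProb N p t
      = (1 - p ((c : ℕ) + 1)) *
        ∑ t ∈ Finset.univ.filter (fun t : Fin N → Bool => t c = true ∧ E t), W t := by
    rw [Finset.mul_sum]
    refine Finset.sum_bij' (fun t _ => Function.update t c true)
      (fun t _ => Function.update t c false) ?_ ?_ ?_ ?_ ?_
    · intro t ht
      simpa [hE] using (Finset.mem_filter.1 ht).2.2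
    · intro t ht
      simpa [hE] using (Finset.mem_filter.1 ht).2.2
    · intro t ht
      have := (Finset.mem_filter.1 ht).2.1
      simp only [Bool.not_eq_true] at this
      simp [← this]
    · intro t ht
      have := (Finset.mem_filter.1 ht).2.1
      simp [← this]
    · intro t ht
      rw [hbern, if_neg (Finset.mem_filter.1 ht).2.1, hWu]
  have hsplit := Finset.sum_filter_add_sum_filter_not (Finset.univ.filter E)
    (fun t : Fin N → Bool => t c = true) (bernProb N p)
  simp only [Finset.filter_filter, and_comm (a := E _)] at hsplit
  rw [← hsplit, hfalse, htrue]
  ring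

open Classical in
lemma sum_lazLastProb {N : ℕ} (p : ℕ → ℝ) {n k : ℕ} (hk2 : k < n) :
    ∑ l ∈ Finset.range (k + 1), lazLastProb N p n l (n + 1 + l - k - 1)
      = ∑ t ∈ Finset.univ.filter (IsPred N n k), bernProb N p t := by
  rw [← Finset.sum_fiberwise_of_maps_to (s := Finset.univ.filter (IsPred N n k))
    (t := Finset.range (k + 1)) (g := fun t => lazTo N t n)]
  · refine Finset.sum_congr rfl fun l hl => ?_
    have hl := Finset.mem_range.1 hl
    unfold lazLastProb
    refine Finset.sum_congr ?_ fun _ _ => rfl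
    ext t
    simp only [Finset.mem_filter, Finset.mem_univ, true_and, IsPred]
    omega
  · intro t ht
    have := (Finset.mem_filter.1 ht).2.1
    exact Finset.mem_range.2 (by omega)

/-- the forward recurrence for the joint lazarus-count / last-one-position
probabilities, for `2 ≤ i ≤ N` and `1 ≤ k ≤ i - 2`:
`P_i(k, i) = p_i · ∑_{l=0}^{k} P_{i-1}(l, i + l - k - 1)`. -/
theorem lazarus_recurrence_last_is_i (N : ℕ) (p : ℕ → ℝ)
    (hp : ∀ l, 1 ≤ l → l ≤ N → 0 ≤ p l ∧ p l ≤ 1)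
    (i k : ℕ) (hi2 : 2 ≤ i) (hiN : i ≤ N) (hk1 : 1 ≤ k) (hk2 : k ≤ i - 2) :
    lazLastProb N p i k i
      = p i * ∑ l ∈ Finset.range (k + 1), lazLastProb N p (i - 1) l (i + l - k - 1) := by
  classical
  obtain ⟨n, rfl⟩ : ∃ n, i = n + 1 := ⟨i - 1, by omega⟩
  have hn : n < N := by omega
  rw [Nat.add_sub_cancel, sum_lazLastProb p (by omega : k < n)]
  have h := sum_coord_true p ⟨n, hn⟩ (IsPred N n k) (isPred_update hn)
  rw [← h]
  unfold lazLastProb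
  refine Finset.sum_congr (Finset.filter_congr fun t _ => ?_) fun _ _ => rfl
  exact event_iff hn hk1 (by omega) t
end

section
/- Let t_1,...,t_N be independent Bernoulli random variables with P(t_l = 1) = p_l ∈ [0,1], and for i ≤ N write P_i(k, j) for the probability that, among the first i coordinates, the lazarus count equals k and the last one-position equals j. Suppose i ≥ 3 and p_{i-1} > 0. Then for every k with 2 ≤ k ≤ i - 2: P_i(k, i) = p_i · P_{i-1}(k, i-1) + p_i · ((1 - p_{i-1}) / p_{i-1}) · P_{i-1}(k-1, i-1). (This reduces the linear-size sum in the lazarus recurrence to a constant-size expression.) -/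
/-- The zeros of `t` at coordinates before `d` that are preceded by a one. When `t d = true`
these are exactly the lazarus zeros of `t` restricted to the coordinates up to `d`. -/
def zerosBefore {N : ℕ} (t : Fin N → Bool) (d : Fin N) : Finset (Fin N) :=
  Finset.univ.filter fun l => l < d ∧ t l = false ∧ ∃ a, a < l ∧ t a = true

lemma lazTo_eq_card_zerosBefore {N : ℕ} (t : Fin N → Bool) (d : Fin N) (hd : t d = true) :
    lazTo N t ((d : ℕ) + 1) = (zerosBefore t d).card := by
  unfold lazTo zerosBefore
  congr 1
  ext l
  simp only [Finset.mem_filter, Finset.mem_univ, true_and]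
  constructor
  · rintro ⟨_, h0, a, b, hb, hal, hlb, ha, _⟩
    refine ⟨?_, h0, a, hal, ha⟩
    rw [Fin.lt_def] at *
    omega
  · rintro ⟨hl, h0, a, hal, ha⟩
    refine ⟨?_, h0, a, d, le_rfl, hal, hl, ha, hd⟩
    rw [Fin.lt_def] at *
    omega

lemma lastTo_eq_iff {N : ℕ} (t : Fin N → Bool) (d : Fin N) :
    lastTo N t ((d : ℕ) + 1) = (d : ℕ) + 1 ↔ t d = true := by
  unfold lastTo
  constructor
  · intro h
    by_contra hd
    have : (Finset.univ.filter fun l : Fin N => (l : ℕ) + 1 ≤ (d : ℕ) + 1 ∧ t l = true).sup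
        (fun l => (l : ℕ) + 1) ≤ d := by
      refine Finset.sup_le fun l hl => ?_
      simp only [Finset.mem_filter, Finset.mem_univ, true_and] at hl
      have hne : (l : ℕ) ≠ d := fun e => hd (Fin.ext e ▸ hl.2)
      omega
    omega
  · intro hd
    refine le_antisymm (Finset.sup_le fun l hl => ?_) ?_
    · simp only [Finset.mem_filter] at hl
      exact hl.2.1
    · exact Finset.le_sup (f := fun l : Fin N => (l : ℕ) + 1) (by simp [hd])

/-- Switching off `t d` exchanges the weight factor `p` for `1 - p`; stated without division. -/
lemma bernProb_update {N : ℕ} (p : ℕ → ℝ) (t : Fin N → Bool) (d : Fin N) (hd : t d = true) :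
    p ((d : ℕ) + 1) * bernProb N p (Function.update t d false)
      = (1 - p ((d : ℕ) + 1)) * bernProb N p t := by
  unfold bernProb
  rw [← Finset.mul_prod_erase _ _ (Finset.mem_univ d),
    ← Finset.mul_prod_erase (a := d) _ (fun l : Fin N =>
      if t l = true then p ((l : ℕ) + 1) else 1 - p ((l : ℕ) + 1)) (Finset.mem_univ d)]
  have h : ∏ l ∈ Finset.univ.erase d, (if Function.update t d false l = true
      then p ((l : ℕ) + 1) else 1 - p ((l : ℕ) + 1))
      = ∏ l ∈ Finset.univ.erase d, (if t l = true
      then p ((l : ℕ) + 1) else 1 - p ((l : ℕ) + 1)) := by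
    refine Finset.prod_congr rfl fun l hl => ?_
    rw [Function.update_of_ne (Finset.ne_of_mem_erase hl)]
  rw [h]
  simp [hd]
  ring

/-- Summing over all transactions by pairing those with `t d = true` with those with
`t d = false`. -/
lemma sum_pair {N : ℕ} (F : (Fin N → Bool) → ℝ) (d : Fin N) :
    ∑ t, F t = ∑ t ∈ Finset.univ.filter (fun t : Fin N → Bool => t d = true),
      (F t + F (Function.update t d false)) := by
  rw [Finset.sum_add_distrib,
    ← Finset.sum_filter_add_sum_filter_not Finset.univ (fun t : Fin N → Bool => t d = true) F]
  congr 1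
  refine Finset.sum_bij' (fun t _ => Function.update t d true)
    (fun t _ => Function.update t d false) ?_ ?_ ?_ ?_ ?_
  · simp
  · simp
  · intro t ht
    simp only [Finset.mem_filter, Finset.mem_univ, true_and, Bool.not_eq_true] at ht
    simp [← ht]
  · intro t ht
    simp only [Finset.mem_filter, Finset.mem_univ, true_and] at ht
    simp [← ht]
  · intro t ht
    simp only [Finset.mem_filter, Finset.mem_univ, true_and, Bool.not_eq_true] at ht
    simp [← ht]

/-- An event `E` not depending on coordinate `d` is independent of `t d = true`. -/
lemma sum_indep {N : ℕ} (p : ℕ → ℝ) (d : Fin N) (E : (Fin N → Bool) → Prop) [DecidablePred E]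
    (hE : ∀ t, E (Function.update t d false) ↔ E t) :
    ∑ t ∈ Finset.univ.filter (fun t : Fin N → Bool => t d = true ∧ E t), bernProb N p t
      = p ((d : ℕ) + 1) * ∑ t ∈ Finset.univ.filter E, bernProb N p t := by
  rw [Finset.sum_filter E, sum_pair _ d, Finset.mul_sum, ← Finset.filter_filter,
    Finset.sum_filter E]
  refine Finset.sum_congr rfl fun t ht => ?_
  have h := bernProb_update p t d (by simpa using ht)
  simp only [hE]
  split_ifs
  · linear_combination -h
  · simp

lemma zerosBefore_succ {N : ℕ} (t : Fin N → Bool) (c d : Fin N) (hcd : (d : ℕ) = c + 1)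
    (hc : t c = true) : zerosBefore t d = zerosBefore t c := by
  unfold zerosBefore
  ext l
  simp only [Finset.mem_filter, Finset.mem_univ, true_and]
  refine and_congr_left fun h => ?_
  have hne : (l : ℕ) ≠ c := by
    intro e
    have := h.1
    rw [Fin.ext e, hc] at this
    cases this
  simp only [Fin.lt_def]
  omega

/-- Here `d` is the coordinate after `c`. Switching off `t c` and counting up to `d` adds exactly
`c` to the set of zeros, provided some one precedes `c`; otherwise both sets are empty, and
`2 ≤ k` makes both sides false. -/
lemma card_zerosBefore_update {N : ℕ} (t : Fin N → Bool) (c d : Fin N) (hcd : (d : ℕ) = c + 1)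
    (k : ℕ) (hk : 2 ≤ k) :
    (zerosBefore (Function.update t c false) d).card = k ↔ (zerosBefore t c).card = k - 1 := by
  have hmem : ∀ l, l ∈ zerosBefore (Function.update t c false) d ↔
      (l = c ∧ ∃ a, a < c ∧ t a = true) ∨ l ∈ zerosBefore t c := by
    intro l
    simp only [zerosBefore, Finset.mem_filter, Finset.mem_univ, true_and]
    have hex : l ≤ c → ((∃ a, a < l ∧ Function.update t c false a = true) ↔
        ∃ a, a < l ∧ t a = true) := fun hl => exists_congr fun a => and_congr_right fun ha => by
      rw [Function.update_of_ne (ha.trans_le hl).ne]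
    have hld : l < d ↔ l ≤ c := by
      rw [Fin.lt_def, Fin.le_def]
      omega
    rw [hld]
    rcases lt_trichotomy l c with h | h | h
    · simp [hex h.le, h, h.le, h.ne]
    · subst h
      simp [hex le_rfl]
    · simp [h.not_ge, h.ne', h.not_gt]
  by_cases hone : ∃ a, a < c ∧ t a = true
  · have hset : zerosBefore (Function.update t c false) d = insert c (zerosBefore t c) := by
      ext l
      rw [hmem, Finset.mem_insert, and_iff_left hone]
    rw [hset, Finset.card_insert_of_notMem (by simp [zerosBefore])]
    omega
  · have h1 : zerosBefore t c = ∅ := by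
      ext l
      simp only [zerosBefore, Finset.mem_filter, Finset.notMem_empty, iff_false]
      rintro ⟨_, hl, _, a, hal, ha⟩
      exact hone ⟨a, hal.trans hl, ha⟩
    have h2 : zerosBefore (Function.update t c false) d = ∅ := by
      ext l
      simp [hmem, h1, hone]
    rw [h1, h2, Finset.card_empty]
    omega

/-- `P_i(k, i)` in terms of `zerosBefore`, where `d` is the coordinate of item `i`. -/
lemma lazLastProb_eq {N : ℕ} (p : ℕ → ℝ) (d : Fin N) (k : ℕ) :
    lazLastProb N p ((d : ℕ) + 1) k ((d : ℕ) + 1) =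
      ∑ t ∈ Finset.univ.filter
        (fun t : Fin N → Bool => t d = true ∧ (zerosBefore t d).card = k), bernProb N p t := by
  unfold lazLastProb
  refine Finset.sum_congr (Finset.filter_congr fun t _ => ?_) fun _ _ => rfl
  rw [lastTo_eq_iff, and_comm]
  exact and_congr_right fun h => by rw [lazTo_eq_card_zerosBefore t d h]

lemma zerosBefore_update_of_lt {N : ℕ} (t : Fin N → Bool) (c d : Fin N) (hcd : c < d) :
    zerosBefore (Function.update t d false) c = zerosBefore t c := by
  unfold zerosBefore
  refine Finset.filter_congr fun l _ => and_congr_right fun hl => ?_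
  rw [Function.update_of_ne (hl.trans hcd).ne]
  refine and_congr_right fun _ => exists_congr fun a => and_congr_right fun ha => ?_
  rw [Function.update_of_ne (ha.trans (hl.trans hcd)).ne]

/-- the constant-size form of the lazarus recurrence, for `i ≥ 3`,
`p_{i-1} > 0` and `2 ≤ k ≤ i - 2`:
`P_i(k, i) = p_i · P_{i-1}(k, i-1) + p_i · ((1 - p_{i-1})/p_{i-1}) · P_{i-1}(k-1, i-1)`. -/
theorem lazarus_recurrence_constant_size (N : ℕ) (p : ℕ → ℝ)
    (hp : ∀ l, 1 ≤ l → l ≤ N → 0 ≤ p l ∧ p l ≤ 1)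
    (i k : ℕ) (hi3 : 3 ≤ i) (hiN : i ≤ N) (hpi : 0 < p (i - 1))
    (hk2 : 2 ≤ k) (hki : k ≤ i - 2) :
    lazLastProb N p i k i
      = p i * lazLastProb N p (i - 1) k (i - 1)
        + p i * ((1 - p (i - 1)) / p (i - 1)) * lazLastProb N p (i - 1) (k - 1) (i - 1) := by
  obtain ⟨n, rfl⟩ : ∃ n, i = n + 2 := ⟨i - 2, by omega⟩
  obtain ⟨c, hc⟩ : ∃ c : Fin N, (c : ℕ) = n := ⟨⟨n, by omega⟩, rfl⟩
  obtain ⟨d, hd⟩ : ∃ d : Fin N, (d : ℕ) = n + 1 := ⟨⟨n + 1, by omega⟩, rfl⟩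
  have hcd : (d : ℕ) = c + 1 := by omega
  have hlt : c < d := by
    rw [Fin.lt_def]
    omega
  have e1 : n + 2 = (d : ℕ) + 1 := by omega
  have e2 : n + 2 - 1 = (c : ℕ) + 1 := by omega
  rw [e2] at hpi ⊢
  rw [e1, lazLastProb_eq, lazLastProb_eq, lazLastProb_eq, mul_right_comm]
  have hind : ∀ m, p ((d : ℕ) + 1) * ∑ t ∈ Finset.univ.filter
        (fun t : Fin N → Bool => t c = true ∧ (zerosBefore t c).card = m), bernProb N p t
      = ∑ t ∈ Finset.univ.filter (fun t : Fin N → Bool =>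
          t d = true ∧ t c = true ∧ (zerosBefore t c).card = m), bernProb N p t := by
    intro m
    refine (sum_indep p d _ fun t => ?_).symm
    rw [zerosBefore_update_of_lt t c d hlt, Function.update_of_ne hlt.ne]
  rw [hind, hind, Finset.sum_filter, sum_pair _ c, Finset.sum_add_distrib]
  have hcomm : ∀ m, Finset.univ.filter (fun t : Fin N → Bool =>
        t d = true ∧ t c = true ∧ (zerosBefore t c).card = m)
      = (Finset.univ.filter (fun t : Fin N → Bool => t c = true)).filter
        (fun t => t d = true ∧ (zerosBefore t c).card = m) := by
    intro m
    rw [Finset.filter_filter]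
    exact Finset.filter_congr fun t _ => and_left_comm
  rw [hcomm, hcomm, Finset.sum_filter _ (bernProb N p), Finset.sum_filter _ (bernProb N p),
    Finset.sum_mul]
  congr 1
  · refine Finset.sum_congr rfl fun t ht => ?_
    rw [zerosBefore_succ t c d hcd (by simpa using ht)]
  · refine Finset.sum_congr rfl fun t ht => ?_
    have hw := bernProb_update p t c (by simpa using ht)
    simp only [card_zerosBefore_update t c d hcd k hk2, Function.update_of_ne hlt.ne']
    split_ifs
    · field_simp
      linear_combination hw
    · simp
end
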